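/- arXiv:2104.12645 — 5 statements merged into one kernel-verified Lean document; each statement's English description precedes it below -/
import Mathlib

section
/- Let f : X → Y be a quasi-compact morphism of schemes and let π be a global section of O_Y. If f is a v-covering, then f is a π-complete arc-covering. -/
/-!
STATEMENT 0: Let `f : X → Y` be a quasi-compact morphism of schemes and let `π` be a global
section of `O_Y`.  If `f` is a v-covering, then `f` is a `π`-complete arc-covering.
-/

open AlgebraicGeometry CategoryTheory Opposite

universe u

/-- A bundled valuation ring. -/
structure ValRing : Type (u + 1) where
  carrier : Type u
  [commRing : CommRing carrier]
  [isDomain : IsDomain carrier]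
  [valuationRing : ValuationRing carrier]

attribute [instance] ValRing.commRing ValRing.isDomain ValRing.valuationRing

instance : CoeSort ValRing.{u} (Type u) := ⟨ValRing.carrier⟩

/-- The image of a global section `π` of `O_Y` in `V` under a morphism `Spec V ⟶ Y`. -/
noncomputable def sectionPullback {Y : Scheme.{u}} (π : Γ(Y, ⊤)) {V : Type u} [CommRing V]
    (g : Spec (CommRingCat.of V) ⟶ Y) : V :=
  (Scheme.ΓSpecIso (CommRingCat.of V)).hom (g.appTop π)

/-- A quasi-compact morphism of schemes `f : X ⟶ Y` is a v-covering if for every valuation ring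
`V` and every morphism `Spec V ⟶ Y` there exist an extension of valuation rings `V → W`
(an injective local ring homomorphism of valuation rings) and a lift `Spec W ⟶ X`. -/
def IsVCovering {X Y : Scheme.{u}} (f : X ⟶ Y) : Prop :=
  ∀ (V : ValRing.{u}) (g : Spec (CommRingCat.of V.carrier) ⟶ Y),
    ∃ (W : ValRing.{u}) (ι : V.carrier →+* W.carrier)
      (h : Spec (CommRingCat.of W.carrier) ⟶ X),
        Function.Injective ι ∧ IsLocalHom ι ∧
          h ≫ f = Spec.map (CommRingCat.ofHom ι) ≫ g

/-- A quasi-compact morphism of schemes `f : X ⟶ Y` together with `π ∈ Γ(Y, O_Y)` is a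
`π`-complete arc-covering if for every `π`-adically complete valuation ring `V` of Krull
dimension at most `1` and every morphism `Spec V ⟶ Y` there exist an extension of
`π`-adically complete valuation rings `V → W` of Krull dimension at most `1` and a lift
`Spec W ⟶ X`. -/
def IsPiCompleteArcCovering {X Y : Scheme.{u}} (f : X ⟶ Y) (π : Γ(Y, ⊤)) : Prop :=
  ∀ (V : ValRing.{u}) (g : Spec (CommRingCat.of V.carrier) ⟶ Y),
    ringKrullDim V.carrier ≤ 1 →
    IsAdicComplete (Ideal.span {sectionPullback π g}) V.carrier →
    ∃ (W : ValRing.{u}) (ι : V.carrier →+* W.carrier)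
      (h : Spec (CommRingCat.of W.carrier) ⟶ X),
        ringKrullDim W.carrier ≤ 1 ∧
        IsAdicComplete (Ideal.span {ι (sectionPullback π g)}) W.carrier ∧
        Function.Injective ι ∧ IsLocalHom ι ∧
          h ≫ f = Spec.map (CommRingCat.ofHom ι) ≫ g

/-- Axiomatic form of the completion step. -/
lemma completion_aux {A B : Type u} [CommRing A] [IsDomain A] [ValuationRing A] [CommRing B]
    (φ : A →+* B) (s : A) (hs0 : s ≠ 0) (hsu : ¬ IsUnit s)
    (H1 : ∀ (n : ℕ) (x : B), ∃ a y, x = φ a + φ s ^ n * y)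
    (H2 : ∀ (n : ℕ) (a : A), φ s ^ n ∣ φ a → s ^ n ∣ a)
    (H3 : IsAdicComplete (Ideal.span {φ s}) B)
    (H4 : ∀ a : A, ¬ IsUnit a → ∃ n : ℕ, s ∣ a ^ n) :
    ∃ (_ : IsDomain B), ValuationRing B ∧ ringKrullDim B ≤ 1 ∧ φ s ≠ 0 ∧ ¬ IsUnit (φ s) := by
  have key : ∀ x : B, x ≠ 0 → ∃ (a : A) (u : B) (n : ℕ), IsUnit u ∧ x = φ a * u ∧ a ∣ s ^ n := by
    intro x hx
    have : ∃ n : ℕ, ¬ φ s ^ n ∣ x := by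
      by_contra! hcon
      apply hx
      refine H3.toIsHausdorff.haus x fun n => ?_
      rw [SModEq.zero, Ideal.span_singleton_pow, smul_eq_mul, Ideal.mul_top,
        Ideal.mem_span_singleton]
      exact hcon n
    obtain ⟨n, hn⟩ := this
    obtain ⟨a, y, hxy⟩ := H1 (n + 1) x
    have han : ¬ s ^ n ∣ a := by
      rintro ⟨c, rfl⟩
      apply hn
      rw [hxy, map_mul, map_pow, pow_succ, mul_assoc]
      exact dvd_add (dvd_mul_right _ _) (dvd_mul_right _ _)
    obtain ⟨b, hb⟩ := (ValuationRing.dvd_total (s ^ n) a).resolve_left han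
    refine ⟨a, 1 + φ s * (φ b * y), n, ?_, ?_, ⟨b, hb⟩⟩
    · have := IsAdicComplete.le_jacobson_bot (Ideal.span {φ s})
        (Ideal.mem_span_singleton_self (φ s))
      rw [Ideal.mem_jacobson_bot] at this
      rw [add_comm]
      exact this _
    · rw [hxy, pow_succ, ← map_pow, hb, map_mul]; ring
  have hpow : ∀ n : ℕ, φ s ^ n ≠ 0 := by
    intro n hn
    have h := H2 (n + 1) (s ^ n) (by rw [map_pow, hn]; exact dvd_zero _)
    apply hsu
    obtain ⟨c, hc⟩ := h
    have h' : s ^ n * (s * c) = s ^ n * 1 := by rw [mul_one, ← mul_assoc, ← pow_succ]; exact hc.symm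
    exact IsUnit.of_mul_eq_one _ (mul_left_cancel₀ (pow_ne_zero n hs0) h')
  have key2 : ∀ x : B, x ≠ 0 → ∃ n : ℕ, x ∣ φ s ^ n := by
    intro x hx
    obtain ⟨a, u, n, hu, rfl, h⟩ := key x hx
    refine ⟨n, ?_⟩
    rw [hu.mul_right_dvd, ← map_pow]
    exact map_dvd φ h
  have hnt : Nontrivial B := ⟨φ s ^ 0, 0, hpow 0⟩
  have hnzd : NoZeroDivisors B := ⟨by
    intro x y hxy
    by_contra! hcon
    obtain ⟨i, hi⟩ := key2 x hcon.1
    obtain ⟨j, hj⟩ := key2 y hcon.2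
    apply hpow (i + j)
    have := mul_dvd_mul hi hj
    rw [hxy, zero_dvd_iff, ← pow_add] at this
    exact this⟩
  have hdom : IsDomain B := NoZeroDivisors.to_isDomain B
  have hsu' : ¬ IsUnit (φ s) := by
    intro h
    have h1 := H2 1 1 (by rw [pow_one]; exact h.dvd)
    rw [pow_one] at h1
    exact hsu (isUnit_of_dvd_one h1)
  refine ⟨hdom, ?_, ?_, by simpa using hpow 1, hsu'⟩
  · rw [ValuationRing.iff_dvd_total]
    refine ⟨fun x y => ?_⟩
    by_cases hx : x = 0
    · right; rw [hx]; exact dvd_zero _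
    by_cases hy : y = 0
    · left; rw [hy]; exact dvd_zero _
    obtain ⟨a, u, n, hu, rfl, -⟩ := key x hx
    obtain ⟨b, v, m, hv, rfl, -⟩ := key y hy
    rw [hu.mul_right_dvd, hv.mul_right_dvd, hu.dvd_mul_right, hv.dvd_mul_right]
    exact (ValuationRing.dvd_total a b).imp (map_dvd φ) (map_dvd φ)
  · have : Ring.KrullDimLE 1 B := by
      refine Ring.KrullDimLE.mk₁' fun I hI hIp => ?_
      obtain ⟨y, hyI, hy0⟩ := Submodule.exists_mem_ne_zero_of_ne_bot hI
      obtain ⟨m, hm⟩ := key2 y hy0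
      have hsI : φ s ∈ I := hIp.mem_of_pow_mem m (I.mem_of_dvd hm hyI)
      refine Ideal.isMaximal_iff.2 ⟨fun h => hIp.ne_top ((Ideal.eq_top_iff_one I).2 h), ?_⟩
      intro J x hIJ hxI hxJ
      by_cases hxu : IsUnit x
      · rw [← Ideal.eq_top_iff_one]; exact Ideal.eq_top_of_isUnit_mem _ hxJ hxu
      exfalso
      apply hxI
      by_cases hx : x = 0
      · rw [hx]; exact I.zero_mem
      obtain ⟨a, u, n, hu, rfl, -⟩ := key x hx
      have ha : ¬ IsUnit a := fun h => hxu ((h.map φ).mul hu)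
      obtain ⟨k, hk⟩ := H4 a ha
      have : φ a ∈ I := hIp.mem_of_pow_mem k
        (I.mem_of_dvd (by rw [← map_pow]; exact map_dvd φ hk) hsI)
      exact I.mul_mem_right _ this
    exact_mod_cast Ring.krullDimLE_iff.1 this

/-- A complete rank one valuation ring attached to a nonzero nonunit of a valuation ring. -/
lemma exists_complete (W : Type u) [CommRing W] [IsDomain W] [ValuationRing W] (s : W)
    (hs0 : s ≠ 0) (hsu : ¬ IsUnit s) :
    ∃ (B : ValRing.{u}) (φ : W →+* B.carrier), ringKrullDim B.carrier ≤ 1 ∧ φ s ≠ 0 ∧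
      ¬ IsUnit (φ s) ∧ IsAdicComplete (Ideal.span {φ s}) B.carrier := by
  let q : Ideal W := (Ideal.span {s}).radical
  have hmem : ∀ x, x ∈ q ↔ ∃ n : ℕ, s ∣ x ^ n := fun x => by
    simp only [q, Ideal.mem_radical_iff, Ideal.mem_span_singleton]
  have hsq : s ∈ q := (hmem s).2 ⟨1, by simp⟩
  have hq : q.IsPrime := by
    refine ⟨?_, ?_⟩
    · rw [Ne, Ideal.eq_top_iff_one, hmem]
      rintro ⟨n, hn⟩
      rw [one_pow] at hn
      exact hsu (isUnit_of_dvd_one hn)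
    · intro x y hxy
      have aux : ∀ x y : W, x * y ∈ q → x ∣ y → y ∈ q := by
        rintro x y h ⟨c, rfl⟩
        refine Ideal.radical_isRadical (Ideal.span {s}) ⟨2, ?_⟩
        · change _ ∈ q
          have : (x * c) ^ 2 = c * (x * (x * c)) := by ring
          rw [this]; exact q.mul_mem_left _ h
      rcases ValuationRing.dvd_total x y with h | h
      · exact Or.inr (aux x y hxy h)
      · exact Or.inl (aux y x (by rwa [mul_comm]) h)
  let A := Localization.AtPrime q
  have hdom : IsDomain A := IsLocalization.isDomain_localization q.primeCompl_le_nonZeroDivisors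
  have hval : ValuationRing A := by
    rw [ValuationRing.iff_dvd_total]
    refine ⟨fun x y => ?_⟩
    obtain ⟨a, b, rfl⟩ := IsLocalization.exists_mk'_eq q.primeCompl x
    obtain ⟨c, d, rfl⟩ := IsLocalization.exists_mk'_eq q.primeCompl y
    have e : ∀ (a : W) (b : q.primeCompl), ∃ u : A, IsUnit u ∧
        IsLocalization.mk' A a b = algebraMap W A a * u := fun a b =>
      ⟨IsLocalization.mk' A 1 b, by
        refine IsUnit.of_mul_eq_one (algebraMap W A b) ?_
        rw [IsLocalization.mk'_spec, map_one], IsLocalization.mk'_eq_mul_mk'_one a b⟩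
    obtain ⟨u, hu, h1⟩ := e a b
    obtain ⟨v, hv, h2⟩ := e c d
    rw [h1, h2, hu.mul_right_dvd, hv.mul_right_dvd, hu.dvd_mul_right, hv.dvd_mul_right]
    exact (ValuationRing.dvd_total a c).imp (map_dvd _) (map_dvd _)
  let sA : A := algebraMap W A s
  have hsA0 : sA ≠ 0 := by
    rw [Ne, IsLocalization.to_map_eq_zero_iff A q.primeCompl_le_nonZeroDivisors]
    exact hs0
  have hsAu : ¬ IsUnit sA := by
    rw [IsLocalization.AtPrime.isUnit_to_map_iff A q]
    exact fun h => h hsq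
  let I : Ideal A := Ideal.span {sA}
  have hfg : I.FG := ⟨{sA}, by simp [I]⟩
  let B := AdicCompletion I A
  let φ : A →+* B := algebraMap A B
  have hker : ∀ (n : ℕ) (x : B), AdicCompletion.eval I A n x = 0 ↔ φ sA ^ n ∣ x := by
    intro n x
    rw [← LinearMap.mem_ker, ← AdicCompletion.pow_smul_top_eq_ker_eval hfg,
      Ideal.span_singleton_pow, Submodule.ideal_span_singleton_smul,
      Submodule.mem_smul_pointwise_iff_exists]
    constructor
    · rintro ⟨y, -, rfl⟩
      exact ⟨y, by rw [Algebra.smul_def, map_pow]⟩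
    · rintro ⟨y, rfl⟩
      exact ⟨y, trivial, by rw [Algebra.smul_def, map_pow]⟩
  have heval : ∀ (n : ℕ) (a : A), AdicCompletion.eval I A n (φ a) = 0 ↔ sA ^ n ∣ a := by
    intro n a
    change (Submodule.Quotient.mk a : A ⧸ (I ^ n • ⊤ : Submodule A A)) = 0 ↔ _
    rw [Submodule.Quotient.mk_eq_zero, Ideal.span_singleton_pow, smul_eq_mul, Ideal.mul_top,
      Ideal.mem_span_singleton]
  obtain ⟨hBd, hBv, hBk, h0, hu⟩ := completion_aux φ sA hsA0 hsAu (by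
      intro n x
      obtain ⟨a, ha⟩ := Submodule.mkQ_surjective _ (AdicCompletion.eval I A n x)
      have : AdicCompletion.eval I A n (x - φ a) = 0 := by
        rw [map_sub, sub_eq_zero, ← ha]; rfl
      obtain ⟨y, hy⟩ := (hker n _).1 this
      exact ⟨a, y, by rw [← hy]; ring⟩)
    (fun n a h => (heval n a).1 ((hker n _).2 h)) (by
      have : Ideal.span {φ sA} = I.map (algebraMap A B) := by
        rw [Ideal.map_span, Set.image_singleton]
      rw [this, IsAdicComplete.map_algebraMap_iff]
      exact AdicCompletion.isAdicComplete hfg) (by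
      intro a ha
      obtain ⟨w, d, rfl⟩ := IsLocalization.exists_mk'_eq q.primeCompl a
      have hw : w ∈ q := by
        by_contra hw
        exact ha ((IsLocalization.AtPrime.isUnit_mk'_iff A q w d).2 hw)
      obtain ⟨n, hn⟩ := (hmem w).1 hw
      refine ⟨n, ?_⟩
      rw [IsLocalization.mk'_eq_mul_mk'_one, mul_pow, ← map_pow]
      exact (map_dvd (algebraMap W A) hn).mul_right _)
  refine ⟨⟨B⟩, φ.comp (algebraMap W A), hBk, h0, hu, ?_⟩
  have : Ideal.span {φ sA} = I.map (algebraMap A B) := by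
    rw [Ideal.map_span, Set.image_singleton]
  change IsAdicComplete (Ideal.span {φ sA}) B
  rw [this, IsAdicComplete.map_algebraMap_iff]
  exact AdicCompletion.isAdicComplete hfg

/-- If a quasi-compact morphism of schemes is a v-covering, then it is a `π`-complete
arc-covering for any global section `π` of the base. -/
theorem isPiCompleteArcCovering_of_isVCovering {X Y : Scheme.{u}} (f : X ⟶ Y)
    [QuasiCompact f] (π : Γ(Y, ⊤)) (hf : IsVCovering f) :
    IsPiCompleteArcCovering f π := by
  intro V g hdim hcomp
  obtain ⟨W, ι, h, hinj, hloc, hcomm⟩ := hf V g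
  generalize sectionPullback π g = t at hcomp ⊢
  have htu : ¬ IsUnit t := by
    intro ht
    rw [Ideal.span_singleton_eq_top.2 ht] at hcomp
    exact not_subsingleton _ hcomp.subsingleton
  have lift : ∀ (B : ValRing.{u}) (φ : W.carrier →+* B.carrier),
      (Spec.map (CommRingCat.ofHom φ) ≫ h) ≫ f =
        Spec.map (CommRingCat.ofHom (φ.comp ι)) ≫ g := by
    intro B φ
    rw [Category.assoc, hcomm, CommRingCat.ofHom_comp, Spec.map_comp, Category.assoc]
  by_cases hV : IsField V.carrier
  · have ht : t = 0 := by
      by_contra h0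
      obtain ⟨b, hb⟩ := hV.mul_inv_cancel h0
      exact htu (IsUnit.of_mul_eq_one b hb)
    subst ht
    refine ⟨⟨FractionRing W.carrier⟩, (algebraMap _ _).comp ι, _, ?_, ?_, ?_, ?_, lift _ _⟩
    · change ringKrullDim (FractionRing W.carrier) ≤ 1
      rw [ringKrullDim_eq_zero_of_field]; exact zero_le_one
    · rw [map_zero, Ideal.span_singleton_zero]; infer_instance
    · exact (IsFractionRing.injective W.carrier (FractionRing W.carrier)).comp hinj
    · refine ⟨fun a ha => ?_⟩
      have h0 : a ≠ 0 := by
        rintro rfl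
        rw [map_zero] at ha
        exact not_isUnit_zero ha
      obtain ⟨b, hb⟩ := hV.mul_inv_cancel h0
      exact IsUnit.of_mul_eq_one b hb
  obtain ⟨m, hm0, hmu, hmt⟩ : ∃ m : V.carrier, m ≠ 0 ∧ ¬ IsUnit m ∧ (t ≠ 0 → m = t) := by
    by_cases ht : t = 0
    · obtain ⟨m, h1, h2⟩ := Ring.exists_not_isUnit_of_not_isField hV
      exact ⟨m, h1, h2, fun h => absurd ht h⟩
    · exact ⟨t, ht, htu, fun _ => rfl⟩
  obtain ⟨B, φ, hBk, hB0, hBu, hBc⟩ := exists_complete W.carrier (ι m)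
    (by rwa [Ne, map_eq_zero_iff ι hinj]) (fun h => hmu (isUnit_of_map_unit ι m h))
  have hk : Ring.KrullDimLE 1 V.carrier := Ring.krullDimLE_iff.2 (by exact_mod_cast hdim)
  refine ⟨B, φ.comp ι, _, hBk, ?_, ?_, ?_, lift _ _⟩
  · by_cases ht : t = 0
    · rw [ht, map_zero, Ideal.span_singleton_zero]; infer_instance
    · rw [← hmt ht]; exact hBc
  · rw [RingHom.injective_iff_ker_eq_bot]
    by_contra hne
    have hmax : (RingHom.ker (φ.comp ι)).IsMaximal :=
      Ideal.IsPrime.isMaximal_of_ne_bot (RingHom.ker_isPrime _) hne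
    rw [IsLocalRing.isMaximal_iff] at hmax
    have : m ∈ RingHom.ker (φ.comp ι) := by
      rw [hmax]; exact hmu
    exact hB0 this
  · refine ⟨fun a ha => ?_⟩
    have hP : ((IsLocalRing.maximalIdeal B.carrier).comap (φ.comp ι)).IsPrime := inferInstance
    have hmP : m ∈ (IsLocalRing.maximalIdeal B.carrier).comap (φ.comp ι) := hBu
    have hmax := hP.isMaximal_of_ne_bot
      (fun h => hm0 (by rw [h] at hmP; exact hmP))
    rw [IsLocalRing.isMaximal_iff] at hmax
    by_contra hau
    have : a ∈ (IsLocalRing.maximalIdeal B.carrier).comap (φ.comp ι) := by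
      rw [hmax]; exact hau
    exact this ha
end

section
/- Let V be a valuation ring and p ⊆ V a prime ideal. Then the extension of p to the localization V_p coincides with p, i.e. p·V_p = p (under the canonical map V → V_p); equivalently, the sequence of V-modules 0 → V → (V/p) ⊕ V_p → V_p/pV_p → 0 is exact, where the first map sends a to (a mod p, a/1) and the second map sends (a, b) to the difference of the images of a and b in V_p/pV_p. -/
/-!
STATEMENT 4: Let `V` be a valuation ring and `p ⊆ V` a prime ideal.  Then the extension of
`p` to the localization `V_p` coincides (as a subset of `V_p`) with the image of `p` under the
canonical map `V → V_p`, i.e. `p·V_p = p`.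
-/

universe u

theorem valuationRing_prime_extension_eq_image
    (V : Type u) [CommRing V] [IsDomain V] [ValuationRing V]
    (p : Ideal V) [hp : p.IsPrime] :
    ((p.map (algebraMap V (Localization.AtPrime p)) : Ideal (Localization.AtPrime p)) :
        Set (Localization.AtPrime p))
      = (algebraMap V (Localization.AtPrime p)) '' (p : Set V) := by
  ext x
  constructor
  · intro hx
    obtain ⟨⟨a, s⟩, h⟩ := (IsLocalization.mem_map_algebraMap_iff p.primeCompl
      (Localization.AtPrime p)).1 hx
    have hs : (s : V) ∉ p := s.2
    obtain ⟨c, hc | hc⟩ := ValuationRing.cond (a : V) (s : V)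
    · exact absurd (hc ▸ p.mul_mem_right c a.2) hs
    · have hcp : c ∈ p := by
        have h1 : (s : V) * c ∈ p := by rw [hc]; exact a.2
        exact (hp.mem_or_mem h1).resolve_left hs
      refine ⟨c, hcp, ?_⟩
      have hu := IsLocalization.map_units (Localization.AtPrime p) s
      apply hu.mul_right_cancel
      rw [h, ← map_mul, mul_comm, hc]
  · rintro ⟨a, ha, rfl⟩
    exact Ideal.mem_map_of_mem _ ha
end

section
/- Let R be a commutative ring, π ∈ R a nonzerodivisor, R̂ the π-adic completion of R, and φ : R[1/π] → R̂[1/π] the canonical ring homomorphism. Then for every integer n, φ⁻¹(π^n R̂) = π^n R, where π^n R and π^n R̂ denote the respective R- (resp. R̂-) submodules π^n·R ⊆ R[1/π] and π^n·R̂ ⊆ R̂[1/π]. -/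
/-!
STATEMENT 11: Let `R` be a commutative ring, `π` a nonzerodivisor, `R̂` the `π`-adic
completion, and `φ : R[1/π] → R̂[1/π]` the canonical homomorphism.  Then for every integer
`n`, `φ⁻¹(πⁿR̂) = πⁿR` (as subsets of the respective localizations, where `πⁿ` is taken with
respect to the invertible image of `π`).
-/

universe u

theorem unit_zpow_aux {S : Type*} [CommRing S] (u : Sˣ) (i j : ℕ) (z w : S) :
    z = ((u ^ ((i : ℤ) - j) : Sˣ) : S) * w ↔ z * (u : S) ^ j = (u : S) ^ i * w := by
  rw [zpow_sub, zpow_natCast, zpow_natCast, Units.val_mul, mul_right_comm,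
    Units.eq_mul_inv_iff_mul_eq]
  simp

theorem pow_dvd_of_completion_aux {R : Type*} [CommRing R] (π a : R) (k : ℕ)
    (y : AdicCompletion (Ideal.span {π}) R)
    (h : algebraMap R (AdicCompletion (Ideal.span {π}) R) a =
      algebraMap R (AdicCompletion (Ideal.span {π}) R) π ^ k * y) :
    ∃ r, a = π ^ k * r := by
  have h1 := congrArg (AdicCompletion.evalₐ (Ideal.span {π}) k) h
  rw [← map_pow, map_mul, AlgHom.commutes, AlgHom.commutes] at h1
  have h2 : algebraMap R (R ⧸ Ideal.span {π} ^ k) (π ^ k) = 0 :=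
    Ideal.Quotient.eq_zero_iff_mem.2 (Ideal.pow_mem_pow (Ideal.mem_span_singleton_self π) k)
  rw [h2, zero_mul] at h1
  have h3 : a ∈ Ideal.span {π} ^ k := Ideal.Quotient.eq_zero_iff_mem.1 h1
  rw [Ideal.span_singleton_pow, Ideal.mem_span_singleton] at h3
  exact h3

theorem localization_aux {R B : Type*} [CommRing R] [CommRing B] (f : R →+* B) (π : R)
    (H : ∀ (a : R) (k : ℕ) (y : B), f a = f π ^ k * y → ∃ r, a = π ^ k * r)
    (u : (Localization.Away π)ˣ) (hu : (u : Localization.Away π) = algebraMap R _ π)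
    (v : (Localization.Away (f π))ˣ) (hv : (v : Localization.Away (f π)) = algebraMap B _ (f π))
    (n : ℤ) (x : Localization.Away π) :
    (∃ y : B, Localization.awayMap f π x = ((v ^ n : (Localization.Away (f π))ˣ) :
        Localization.Away (f π)) * algebraMap B _ y) ↔
    ∃ r : R, x = ((u ^ n : (Localization.Away π)ˣ) : Localization.Away π) * algebraMap R _ r := by
  obtain ⟨i, j, rfl⟩ : ∃ i j : ℕ, n = (i : ℤ) - j := ⟨n.toNat, (-n).toNat, by omega⟩
  have hmap : ∀ a : R, Localization.awayMap f π (algebraMap R _ a) = algebraMap B _ (f a) := by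
    intro a
    simp [Localization.awayMap, IsLocalization.Away.map]
  simp only [unit_zpow_aux, hu, hv]
  constructor
  · rintro ⟨y, hy⟩
    obtain ⟨k, a, hx⟩ := IsLocalization.Away.surj π x
    have e : algebraMap B (Localization.Away (f π)) (f (a * π ^ j)) =
        algebraMap B _ (f π ^ (k + i) * y) := by
      rw [← hmap, map_mul, ← hx]
      simp only [map_mul, map_pow, hmap]
      linear_combination (algebraMap B (Localization.Away (f π)) (f π)) ^ k * hy
    obtain ⟨⟨_, m, rfl⟩, hc⟩ :=
      (IsLocalization.eq_iff_exists (Submonoid.powers (f π)) _).1 e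
    obtain ⟨r, hr⟩ := H (π ^ m * (a * π ^ j)) (m + (k + i)) y (by
      simp only [map_mul, map_pow] at hc ⊢
      rw [hc]; ring)
    refine ⟨r, ?_⟩
    have hr' := congrArg (algebraMap R (Localization.Away π)) hr
    simp only [map_mul, map_pow] at hr'
    rw [← hx] at hr'
    rw [← hu] at hr' ⊢
    refine (u ^ (m + k)).isUnit.mul_left_cancel ?_
    push_cast
    linear_combination hr'
  · rintro ⟨r, hr⟩
    refine ⟨f r, ?_⟩
    have := congrArg (Localization.awayMap f π) hr
    simpa only [map_mul, map_pow, hmap] using this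

theorem preimage_pow_smul_adicCompletion (R : Type u) [CommRing R]
    (π : R) (hπ : π ∈ nonZeroDivisors R) (n : ℤ) (x : Localization.Away π) :
    (∃ y : AdicCompletion (Ideal.span {π}) R,
        Localization.awayMap (algebraMap R (AdicCompletion (Ideal.span {π}) R)) π x
          = ((IsLocalization.map_units
                (M := Submonoid.powers (algebraMap R (AdicCompletion (Ideal.span {π}) R) π))
                (Localization.Away (algebraMap R (AdicCompletion (Ideal.span {π}) R) π))
                ⟨algebraMap R (AdicCompletion (Ideal.span {π}) R) π,
                  Submonoid.mem_powers _⟩).unit ^ n :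
              (Localization.Away (algebraMap R (AdicCompletion (Ideal.span {π}) R) π))ˣ)
            * algebraMap (AdicCompletion (Ideal.span {π}) R)
                (Localization.Away (algebraMap R (AdicCompletion (Ideal.span {π}) R) π)) y) ↔
    (∃ r : R,
        x = ((IsLocalization.map_units (M := Submonoid.powers π) (Localization.Away π)
                ⟨π, Submonoid.mem_powers _⟩).unit ^ n : (Localization.Away π)ˣ)
          * algebraMap R (Localization.Away π) r) := by
  exact localization_aux (algebraMap R (AdicCompletion (Ideal.span {π}) R)) π
    (fun a k y h => pow_dvd_of_completion_aux π a k y h) _ rfl _ rfl n x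
end

section
/- Let p be a prime number and R a commutative ring. Then there exists an R-algebra R_∞ satisfying: (i) R_∞[1/p] is a filtered colimit of finite étale, faithfully flat R[1/p]-algebras; (ii) R_∞ is the integral closure of R in R_∞[1/p]; (iii) every unit t of R_∞ admits a p-th root t^{1/p} in R_∞. Moreover, if p lies in the Jacobson radical of R and there exist p_2 ∈ R and a unit u ∈ R^× with p = u·p_2^{p²}, then, setting p_1 = p_2^p, one can choose R_∞ so that in addition (iv) the ring homomorphism R_∞/p_1R_∞ → R_∞/pR_∞ induced by x ↦ x^p is an isomorphism. -/
/-!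
STATEMENT 17: For a prime `p` and a commutative ring `R`, there exists an `R`-algebra `R_∞`
such that (i) `R_∞[1/p]` is a filtered (directed) colimit of finite étale faithfully flat
`R[1/p]`-algebras, (ii) `R_∞` is the integral closure of `R` in `R_∞[1/p]`, and (iii) every
unit of `R_∞` admits a `p`-th root.  Moreover, if `p` lies in the Jacobson radical of `R`
and `p = u·p₂^{p²}` for a unit `u`, then one may also require (iv) that the map
`R_∞/p₁R_∞ → R_∞/pR_∞`, `x ↦ x^p`, with `p₁ = p₂^p`, is bijective.
-/

universe u

set_option maxHeartbeats 1000000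
set_option synthInstance.maxHeartbeats 400000

/-- A bundled commutative algebra over `R`. -/
structure AlgPack (R : Type u) [CommRing R] : Type (u + 1) where
  X : Type u
  [commRing : CommRing X]
  [algebra : Algebra R X]

attribute [instance] AlgPack.commRing AlgPack.algebra

section

variable {R : Type u} [CommRing R] (p : ℕ)

/-- Conditions (i)-(iii) on the `R`-algebra `R_∞`. -/
def GoodTower (P : AlgPack R) : Prop :=
  -- (i) `R_∞[1/p]` is a directed union of finite étale faithfully flat `R[1/p]`-subalgebras
  (letI : Algebra (Localization.Away ((p : R)))
      (Localization.Away (algebraMap R P.X (p : R))) :=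
    (Localization.awayMap (algebraMap R P.X) ((p : R))).toAlgebra
   ∃ 𝒮 : Set (Subalgebra (Localization.Away ((p : R)))
      (Localization.Away (algebraMap R P.X (p : R)))),
    (∀ T ∈ 𝒮, Algebra.Etale (Localization.Away ((p : R))) ↥T ∧
      Module.Finite (Localization.Away ((p : R))) ↥T ∧
      Module.FaithfullyFlat (Localization.Away ((p : R))) ↥T) ∧
    (∀ T ∈ 𝒮, ∀ T' ∈ 𝒮, ∃ T'' ∈ 𝒮, T ≤ T'' ∧ T' ≤ T'') ∧
    (∀ x : Localization.Away (algebraMap R P.X (p : R)), ∃ T ∈ 𝒮, x ∈ T)) ∧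
  -- (ii) `R_∞` is the integral closure of `R` in `R_∞[1/p]`
  (Function.Injective (algebraMap P.X (Localization.Away (algebraMap R P.X (p : R)))) ∧
   (letI : Algebra R (Localization.Away (algebraMap R P.X (p : R))) :=
      ((algebraMap P.X (Localization.Away (algebraMap R P.X (p : R)))).comp
        (algebraMap R P.X)).toAlgebra
    ∀ x : Localization.Away (algebraMap R P.X (p : R)),
      IsIntegral R x ↔
        ∃ r : P.X, algebraMap P.X (Localization.Away (algebraMap R P.X (p : R))) r = x)) ∧
  -- (iii) every unit of `R_∞` has a `p`-th root
  (∀ t : (P.X)ˣ, ∃ s : P.X, s ^ p = (t : P.X))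

end

namespace TowerAux

open Polynomial

/-- Finite étale and faithfully flat. -/
structure FEFF (A B : Type u) [CommRing A] [CommRing B] [Algebra A B] : Prop where
  etale : Algebra.Etale A B
  finite : Module.Finite A B
  ff : Module.FaithfullyFlat A B

lemma FEFF.of_equiv {A B C : Type u} [CommRing A] [CommRing B] [Algebra A B]
    [CommRing C] [Algebra A C] (h : FEFF A B) (e : B ≃ₐ[A] C) : FEFF A C := by
  obtain ⟨h1, h2, h3⟩ := h
  exact ⟨Algebra.Etale.of_equiv e, Module.Finite.equiv e.toLinearEquiv,
    Module.FaithfullyFlat.of_linearEquiv _ _ e.symm.toLinearEquiv⟩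

lemma FEFF.trans {A B C : Type u} [CommRing A] [CommRing B] [Algebra A B]
    [CommRing C] [Algebra A C] [Algebra B C] [IsScalarTower A B C]
    (h : FEFF A B) (h' : FEFF B C) : FEFF A C := by
  obtain ⟨h1, h2, h3⟩ := h
  obtain ⟨h1', h2', h3'⟩ := h'
  exact ⟨Algebra.Etale.comp A B C, Module.Finite.trans B C, Module.FaithfullyFlat.trans A B C⟩

lemma FEFF.refl (A : Type u) [CommRing A] : FEFF A A :=
  ⟨inferInstance, inferInstance, inferInstance⟩

/-- The polynomial `X ^ p - t`. -/
noncomputable abbrev kp {A : Type u} [CommRing A] (p : ℕ) (t : A) : A[X] := X ^ p - C t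

lemma kp_monic {A : Type u} [CommRing A] {p : ℕ} (hp : p ≠ 0) (t : A) : (kp p t).Monic :=
  monic_X_pow_sub_C t hp

lemma of_kp_injective {A : Type u} [CommRing A] {p : ℕ} (hp : p ≠ 0) (t : A) :
    Function.Injective (AdjoinRoot.of (kp p t)) := by
  rw [injective_iff_map_eq_zero]
  intro b hb
  nontriviality A
  rw [← AdjoinRoot.mk_C, AdjoinRoot.mk_eq_zero, ← modByMonic_eq_zero_iff_dvd (kp_monic hp t)] at hb
  rw [(modByMonic_eq_self_iff (kp_monic hp t)).2] at hb
  · simpa using hb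
  · rw [degree_X_pow_sub_C (Nat.pos_of_ne_zero hp)]
    exact lt_of_le_of_lt degree_C_le (by exact_mod_cast Nat.pos_of_ne_zero hp)

lemma feff_kp {A : Type u} [CommRing A] {p : ℕ} (hp : p ≠ 0) (hpu : IsUnit (p : A)) (t : A)
    (ht : IsUnit t) : FEFF A (AdjoinRoot (kp p t)) := by
  have hm := kp_monic hp t
  refine ⟨?_, hm.finite_adjoinRoot, ?_⟩
  · obtain ⟨q, hq⟩ := hpu.exists_right_inv
    obtain ⟨s, hs⟩ := ht.exists_right_inv
    obtain ⟨m, rfl⟩ := Nat.exists_eq_succ_of_ne_zero hp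
    let P : StandardEtalePair A :=
      { f := kp (m + 1) t
        monic_f := hm
        g := 1
        cond := ⟨C (q * s) * X, - C s, 1, by
          have hq' : (C ((m + 1 : ℕ) : A) : A[X]) * C q = 1 := by rw [← C_mul, hq, C_1]
          have hs' : (C t : A[X]) * C s = 1 := by rw [← C_mul, hs, C_1]
          simp only [kp, derivative_sub, derivative_X_pow, derivative_C, sub_zero,
            Nat.add_sub_cancel, C_mul, pow_one]
          linear_combination (X ^ (m + 1) * C s) * hq' + hs'⟩ }
    have e1 := P.equivAwayAdjoinRoot
    have hu : IsUnit (AdjoinRoot.mk P.f P.g) := by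
      change IsUnit (AdjoinRoot.mk P.f 1); rw [map_one]; exact isUnit_one
    have e2 := (IsLocalization.atUnit (AdjoinRoot P.f)
      (Localization.Away (AdjoinRoot.mk P.f P.g)) (AdjoinRoot.mk P.f P.g) hu).restrictScalars A
    exact Algebra.Etale.of_equiv (e1.trans e2.symm)
  · cases subsingleton_or_nontrivial A
    · have : Subsingleton (AdjoinRoot (kp p t)) := Module.subsingleton A _
      exact (FEFF.refl A).of_equiv (AlgEquiv.ofBijective (Algebra.ofId A _)
        ⟨fun _ _ _ => Subsingleton.elim _ _, fun _ => ⟨0, Subsingleton.elim _ _⟩⟩) |>.ff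
    · have := hm.free_adjoinRoot
      have : Nontrivial (AdjoinRoot (kp p t)) := (of_kp_injective hp t).nontrivial
      infer_instance

/-- Adjoining a root of `X ^ p - t` is functorial and preserves injections. -/
lemma lift_kp_injective {A C D : Type u} [CommRing A] [CommRing C] [CommRing D] {p : ℕ}
    (hp : p ≠ 0) (t : A) (i : A →+* C) (x : C) (hx : x ^ p = i t) (j : A →+* D)
    (hj : Function.Injective j) (ψ : C →+* AdjoinRoot (kp p (j t)))
    (hψx : ψ x = AdjoinRoot.root _) (hψ : ∀ a, ψ (i a) = AdjoinRoot.of _ (j a)) :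
    Function.Injective (AdjoinRoot.lift (f := kp p t) i x (by simp [hx])) := by
  rw [injective_iff_map_eq_zero]
  intro y hy
  obtain ⟨f, rfl⟩ := AdjoinRoot.mk_surjective y
  rw [AdjoinRoot.lift_mk] at hy
  have h2 := congrArg ψ hy
  have h3 : ψ.comp i = (AdjoinRoot.of _).comp j := RingHom.ext hψ
  rw [hom_eval₂, hψx, h3, map_zero, ← eval₂_map, ← AdjoinRoot.algebraMap_eq, ← aeval_def,
    AdjoinRoot.aeval_eq, AdjoinRoot.mk_eq_zero] at h2
  have h4 : kp p (j t) = (kp p t).map j := by simp [kp]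
  rw [h4, map_dvd_map j hj (kp_monic hp t)] at h2
  rwa [AdjoinRoot.mk_eq_zero]

end TowerAux

namespace TowerAux

open Polynomial

lemma extend_root {A C : Type u} [CommRing A] [CommRing C] [Algebra A C] {p : ℕ}
    (hp : p ≠ 0) (hpu : IsUnit (p : A)) (T : Subalgebra A C) (hT : FEFF A T) (t : T)
    (ht : IsUnit t) (x : C) (hx : x ^ p = (t : C)) (ψ : C →+* AdjoinRoot (kp p (t : C)))
    (hψx : ψ x = AdjoinRoot.root _) (hψ : ∀ a : T, ψ (a : C) = AdjoinRoot.of _ (a : C)) :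
    ∃ T' : Subalgebra A C, FEFF A T' ∧ T ≤ T' ∧ x ∈ T' ∧ T' ≤ T ⊔ Algebra.adjoin A {x} := by
  have hpu' : IsUnit (p : T) := by simpa using hpu.map (algebraMap A T)
  have hinj := lift_kp_injective hp t (T.val : T →+* C) x hx (T.val : T →+* C)
    Subtype.val_injective ψ hψx hψ
  have he : eval₂ (T.val : T →+* C) x (kp p t) = 0 := by simp [hx]
  let φ : AdjoinRoot (kp p t) →ₐ[A] C :=
    { AdjoinRoot.lift (f := kp p t) (T.val : T →+* C) x he with
      commutes' := fun a => by
        simp [AdjoinRoot.algebraMap_eq'] }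
  have hφ : Function.Injective φ := hinj
  have hφr : φ (AdjoinRoot.root _) = x := AdjoinRoot.lift_root he
  have hφo : ∀ a : T, φ (AdjoinRoot.of _ a) = a := fun a => AdjoinRoot.lift_of he
  refine ⟨φ.range, ((hT.trans (feff_kp hp hpu' t ht)).of_equiv (AlgEquiv.ofInjective φ hφ)),
    fun a ha => ⟨AdjoinRoot.of _ ⟨a, ha⟩, hφo _⟩, ⟨_, hφr⟩, ?_⟩
  rintro _ ⟨y, rfl⟩
  obtain ⟨f, rfl⟩ := AdjoinRoot.mk_surjective y
  change φ (AdjoinRoot.mk _ f) ∈ _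
  induction f using Polynomial.induction_on' with
  | add f g hf hg => rw [map_add, map_add]; exact add_mem hf hg
  | monomial n a =>
    rw [← C_mul_X_pow_eq_monomial, map_mul, map_mul, map_pow, map_pow, AdjoinRoot.mk_C,
      AdjoinRoot.mk_X, hφr, hφo]
    exact mul_mem ((le_sup_left : T ≤ _) a.2)
      (pow_mem ((le_sup_right : Algebra.adjoin A {x} ≤ _) (Algebra.subset_adjoin rfl)) _)

/-- The ideal of relations `X_t ^ p = t`. -/
noncomputable abbrev rootIdeal (p : ℕ) (B : Type u) [CommRing B] : Ideal (MvPolynomial Bˣ B) :=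
  Ideal.span (Set.range fun t : Bˣ => MvPolynomial.X t ^ p - MvPolynomial.C (t : B))

/-- `B` with a `p`-th root of every unit adjoined. -/
abbrev RootAlg (p : ℕ) (B : Type u) [CommRing B] : Type u := MvPolynomial Bˣ B ⧸ rootIdeal p B

/-- The tautological root. -/
noncomputable def rt (p : ℕ) {B : Type u} [CommRing B] (t : Bˣ) : RootAlg p B :=
  Ideal.Quotient.mk _ (MvPolynomial.X t)

lemma rt_pow (p : ℕ) {B : Type u} [CommRing B] (t : Bˣ) :
    rt p t ^ p = algebraMap B (RootAlg p B) t := by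
  rw [rt, ← map_pow, ← sub_eq_zero]
  have : algebraMap B (RootAlg p B) t = Ideal.Quotient.mk _ (MvPolynomial.C (t : B)) := rfl
  rw [this, ← map_sub, Ideal.Quotient.eq_zero_iff_mem]
  exact Ideal.subset_span ⟨t, rfl⟩

/-- Maps out of `RootAlg`. -/
lemma exists_lift (p : ℕ) {B D : Type u} [CommRing B] [CommRing D] (i : B →+* D)
    (r : Bˣ → D) (hr : ∀ t, r t ^ p = i t) :
    ∃ ψ : RootAlg p B →+* D, (∀ b, ψ (algebraMap B _ b) = i b) ∧ ∀ t, ψ (rt p t) = r t := by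
  refine ⟨Ideal.Quotient.lift _ (MvPolynomial.eval₂Hom i r) ?_, fun b => ?_, fun t => ?_⟩
  · intro a ha
    change a ∈ RingHom.ker (MvPolynomial.eval₂Hom i r)
    refine (Ideal.span_le.2 ?_ : rootIdeal p B ≤ _) ha
    rintro _ ⟨t, rfl⟩
    simp [RingHom.mem_ker, hr]
  · have : algebraMap B (RootAlg p B) b = Ideal.Quotient.mk _ (MvPolynomial.C b) := rfl
    rw [this, Ideal.Quotient.lift_mk]; simp
  · rw [rt, Ideal.Quotient.lift_mk]; simp

lemma exists_finite_roots {p : ℕ} (hp : p ≠ 0) {B : Type u} [CommRing B] (F : Finset Bˣ) :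
    ∃ (D : Type u) (_ : CommRing D) (i : B →+* D), Function.Injective i ∧
      ∀ t ∈ F, ∃ x : D, x ^ p = i t := by
  classical
  induction F using Finset.induction_on with
  | empty => exact ⟨B, inferInstance, RingHom.id B, fun _ _ h => h, by simp⟩
  | insert t F _ ih =>
    obtain ⟨D, _, i, hi, h⟩ := ih
    have hinj : Function.Injective ((AdjoinRoot.of (kp p (i (t : B)))).comp i) :=
      (of_kp_injective hp (i (t : B))).comp hi
    refine ⟨AdjoinRoot (kp p (i (t : B))), inferInstance, (AdjoinRoot.of (kp p (i (t : B)))).comp i,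
      hinj, ?_⟩
    intro s hs
    rcases Finset.mem_insert.1 hs with rfl | hs
    · refine ⟨AdjoinRoot.root _, ?_⟩
      have := AdjoinRoot.eval₂_root (kp p (i s))
      simpa [sub_eq_zero] using this
    · obtain ⟨x, hx⟩ := h s hs
      exact ⟨AdjoinRoot.of _ x, by rw [← map_pow, hx]; rfl⟩

lemma rootAlg_injective {p : ℕ} (hp : p ≠ 0) (B : Type u) [CommRing B] :
    Function.Injective (algebraMap B (RootAlg p B)) := by
  classical
  rw [injective_iff_map_eq_zero]
  intro b hb
  have : algebraMap B (RootAlg p B) b = Ideal.Quotient.mk _ (MvPolynomial.C b) := rfl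
  rw [this, Ideal.Quotient.eq_zero_iff_mem] at hb
  obtain ⟨T, hT, hbT⟩ := Submodule.mem_span_finite_of_mem_span hb
  rw [← Set.image_univ, Finset.subset_set_image_iff] at hT
  obtain ⟨F, -, rfl⟩ := hT
  obtain ⟨D, _, i, hi, h⟩ := exists_finite_roots hp F
  choose r hr using h
  let ψ := MvPolynomial.eval₂Hom i (fun t => if h : t ∈ F then r t h else 0)
  have h0 : MvPolynomial.C b ∈ RingHom.ker ψ := by
    refine (Submodule.span_le.2 ?_ : Submodule.span _ _ ≤ RingHom.ker ψ) hbT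
    intro y hy
    obtain ⟨t, ht, rfl⟩ := Finset.mem_image.1 (Finset.mem_coe.1 hy)
    simp [RingHom.mem_ker, ψ, ht, hr]
  apply hi
  simpa [RingHom.mem_ker, ψ] using h0

/-- Every finite set is contained in a finite étale faithfully flat subalgebra. -/
def Good (A B : Type u) [CommRing A] [CommRing B] [Algebra A B] : Prop :=
  ∀ s : Finset B, ∃ T : Subalgebra A B, FEFF A T ∧ ∀ x ∈ s, x ∈ T

lemma FEFF.map {A B C : Type u} [CommRing A] [CommRing B] [CommRing C] [Algebra A B]
    [Algebra A C] {T : Subalgebra A B} (hT : FEFF A T) (f : B →ₐ[A] C)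
    (hf : Function.Injective f) : FEFF A (T.map f) :=
  hT.of_equiv (T.equivMapOfInjective f hf)

lemma good_refl (A : Type u) [CommRing A] : Good A A := fun _ =>
  ⟨⊤, (FEFF.refl A).of_equiv Subalgebra.topEquiv.symm, fun _ _ => Algebra.mem_top⟩

lemma extend_finset {A B : Type u} [CommRing A] [CommRing B] [Algebra A B] {p : ℕ}
    (hp : p ≠ 0) (hpu : IsUnit (p : A)) (T : Subalgebra A B) (hT : FEFF A T) (F : Finset Bˣ)
    (hF : ∀ t ∈ F, (t : B) ∈ T ∧ ((t⁻¹ : Bˣ) : B) ∈ T) :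
    ∃ T' : Subalgebra A (RootAlg p B), FEFF A T' ∧ (∀ a ∈ T, algebraMap B _ a ∈ T') ∧
      (∀ t ∈ F, rt p t ∈ T') ∧
      T' ≤ Algebra.adjoin A (Set.range (algebraMap B (RootAlg p B)) ∪ (rt p '' F)) := by
  classical
  induction F using Finset.induction_on with
  | empty =>
    refine ⟨T.map (IsScalarTower.toAlgHom A B (RootAlg p B)),
      hT.map _ (rootAlg_injective hp B), fun a ha => ⟨a, ha, rfl⟩, by simp, ?_⟩
    rintro _ ⟨a, -, rfl⟩
    exact Algebra.subset_adjoin (Or.inl ⟨a, rfl⟩)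
  | insert t F htF ih =>
    obtain ⟨T₁, h1, h2, h3, h4⟩ := ih fun s hs => hF s (Finset.mem_insert_of_mem hs)
    obtain ⟨ht, ht'⟩ := hF t (Finset.mem_insert_self _ _)
    let t₁ : T₁ := ⟨algebraMap B _ t, h2 _ ht⟩
    have hu : IsUnit t₁ := by
      refine IsUnit.of_mul_eq_one ⟨algebraMap B _ ((t⁻¹ : Bˣ) : B), h2 _ ht'⟩ ?_
      apply Subtype.ext
      change algebraMap B (RootAlg p B) t * algebraMap B _ ((t⁻¹ : Bˣ) : B) = 1
      rw [← map_mul]; simp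
    let o := AdjoinRoot.of (kp p (t₁ : RootAlg p B))
    have hroot : AdjoinRoot.root (kp p (t₁ : RootAlg p B)) ^ p = o (t₁ : RootAlg p B) := by
      have := AdjoinRoot.eval₂_root (kp p (t₁ : RootAlg p B))
      simpa [sub_eq_zero] using this
    obtain ⟨ψ, hψ1, hψ2⟩ := exists_lift p (o.comp (algebraMap B (RootAlg p B)))
      (fun s => if s = t then AdjoinRoot.root _ else o (rt p s)) (by
        intro s
        by_cases hs : s = t
        · subst hs; simp only [if_true]; exact hroot
        · simp only [hs, if_false]; rw [← map_pow, rt_pow]; rfl)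
    have hψT : ∀ a ∈ Algebra.adjoin A (Set.range (algebraMap B (RootAlg p B)) ∪ (rt p '' F)),
        ψ a = o a := by
      intro a ha'
      induction ha' using Algebra.adjoin_induction with
      | mem x hx =>
        rcases hx with ⟨b, rfl⟩ | ⟨s, hs, rfl⟩
        · exact hψ1 b
        · have : s ≠ t := by rintro rfl; exact htF hs
          rw [hψ2, if_neg this]
      | algebraMap a =>
        rw [IsScalarTower.algebraMap_apply A B (RootAlg p B)]; exact hψ1 _
      | add x y _ _ hx hy => rw [map_add, map_add, hx, hy]
      | mul x y _ _ hx hy => rw [map_mul, map_mul, hx, hy]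
    obtain ⟨T', g1, g2, g3, g4⟩ := extend_root hp hpu T₁ h1 t₁ hu (rt p t) (rt_pow p t) ψ
      (by rw [hψ2, if_pos rfl]) (fun a => hψT a (h4 a.2))
    refine ⟨T', g1, fun a ha => g2 (h2 a ha), ?_, g4.trans (sup_le (h4.trans ?_) ?_)⟩
    · intro s hs
      rcases Finset.mem_insert.1 hs with rfl | hs
      · exact g3
      · exact g2 (h3 s hs)
    · apply Algebra.adjoin_mono
      rw [Finset.coe_insert]
      exact Set.union_subset_union_right _ (Set.image_mono (Set.subset_insert _ _))
    · apply Algebra.adjoin_mono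
      rw [Finset.coe_insert]
      rintro _ rfl
      exact Or.inr ⟨t, Set.mem_insert _ _, rfl⟩

lemma good_rootAlg {A B : Type u} [CommRing A] [CommRing B] [Algebra A B] {p : ℕ}
    (hp : p ≠ 0) (hpu : IsUnit (p : A)) (h : Good A B) : Good A (RootAlg p B) := by
  classical
  have key : ∀ f : MvPolynomial Bˣ B, ∃ (s : Finset B) (F : Finset Bˣ),
      ∀ T' : Subalgebra A (RootAlg p B), (∀ b ∈ s, algebraMap B _ b ∈ T') →
        (∀ t ∈ F, rt p t ∈ T') → (Ideal.Quotient.mk (rootIdeal p B) f) ∈ T' := by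
    intro f
    induction f using MvPolynomial.induction_on with
    | C b => exact ⟨{b}, ∅, fun T' h1 _ => h1 b (by simp)⟩
    | add f g hf hg =>
      obtain ⟨s, F, h1⟩ := hf
      obtain ⟨s', F', h2⟩ := hg
      refine ⟨s ∪ s', F ∪ F', fun T' ha hb => ?_⟩
      rw [map_add]
      exact add_mem (h1 T' (fun b hb' => ha b (Finset.mem_union_left _ hb'))
          (fun b hb' => hb b (Finset.mem_union_left _ hb')))
        (h2 T' (fun b hb' => ha b (Finset.mem_union_right _ hb'))
          (fun b hb' => hb b (Finset.mem_union_right _ hb')))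
    | mul_X f t hf =>
      obtain ⟨s, F, h1⟩ := hf
      refine ⟨s, insert t F, fun T' ha hb => ?_⟩
      rw [map_mul]
      exact mul_mem (h1 T' ha fun t ht => hb t (Finset.mem_insert_of_mem ht))
        (hb t (Finset.mem_insert_self _ _))
  have key2 : ∀ y : RootAlg p B, ∃ (s : Finset B) (F : Finset Bˣ),
      ∀ T' : Subalgebra A (RootAlg p B), (∀ b ∈ s, algebraMap B _ b ∈ T') →
        (∀ t ∈ F, rt p t ∈ T') → y ∈ T' := by
    intro y
    obtain ⟨f, rfl⟩ := Ideal.Quotient.mk_surjective y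
    exact key f
  choose s F hsF using key2
  intro S
  let F₀ : Finset Bˣ := S.biUnion F
  let s₀ : Finset B := S.biUnion s ∪ (F₀.image fun t : Bˣ => (t : B)) ∪
    F₀.image fun t : Bˣ => ((t⁻¹ : Bˣ) : B)
  obtain ⟨T, hT, hsT⟩ := h s₀
  obtain ⟨T', h1, h2, h3, -⟩ := extend_finset hp hpu T hT F₀ (fun t ht =>
    ⟨hsT _ (Finset.mem_union_left _ (Finset.mem_union_right _ (Finset.mem_image_of_mem _ ht))),
      hsT _ (Finset.mem_union_right _ (Finset.mem_image_of_mem (fun t : Bˣ => ((t⁻¹ : Bˣ) : B)) ht))⟩)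
  refine ⟨T', h1, fun y hy => hsF y T' (fun b hb => h2 b (hsT _ ?_)) (fun t ht => h3 t ?_)⟩
  · exact Finset.mem_union_left _ (Finset.mem_union_left _ (Finset.mem_biUnion.2 ⟨y, hy, hb⟩))
  · exact Finset.mem_biUnion.2 ⟨y, hy, ht⟩

end TowerAux

namespace TowerAux

/-- The sequence of iterated root adjunctions. -/
noncomputable def seqAlg (p : ℕ) (A : Type u) [CommRing A] : ℕ → AlgPack A
  | 0 => ⟨A⟩
  | n + 1 => ⟨RootAlg p (seqAlg p A n).X⟩

/-- The successor map. -/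
noncomputable def seqSucc (p : ℕ) (A : Type u) [CommRing A] (n : ℕ) :
    (seqAlg p A n).X →ₐ[A] (seqAlg p A (n + 1)).X :=
  IsScalarTower.toAlgHom A (seqAlg p A n).X (RootAlg p (seqAlg p A n).X)

lemma seqSucc_injective {p : ℕ} (hp : p ≠ 0) (A : Type u) [CommRing A] (n : ℕ) :
    Function.Injective (seqSucc p A n) := rootAlg_injective hp _

lemma seqAlg_good {p : ℕ} (hp : p ≠ 0) (A : Type u) [CommRing A] (hpu : IsUnit (p : A)) (n : ℕ) :
    Good A (seqAlg p A n).X := by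
  induction n with
  | zero => exact good_refl A
  | succ n ih => exact good_rootAlg hp hpu ih

lemma seqSucc_root {p : ℕ} (A : Type u) [CommRing A] (n : ℕ) (t : ((seqAlg p A n).X)ˣ) :
    ∃ s, s ^ p = seqSucc p A n t := ⟨rt p t, rt_pow p t⟩

section

variable {A : Type u} [CommRing A] (G : ℕ → AlgPack A)
  (f : ∀ n, (G n).X →ₐ[A] (G (n + 1)).X)

/-- Composite transition maps. -/
noncomputable def transMap (m n : ℕ) (h : m ≤ n) : (G m).X →ₐ[A] (G n).X :=
  Nat.leRecOn (C := fun k => (G m).X →ₐ[A] (G k).X) h (fun {k} g => (f k).comp g) (AlgHom.id A _)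

lemma coe_trans (m n : ℕ) (h : m ≤ n) :
    (transMap G f m n h : (G m).X → (G n).X) =
      Nat.leRecOn (C := fun k => (G k).X) h (fun {k} => f k) := by
  obtain ⟨k, rfl⟩ := Nat.exists_eq_add_of_le h
  ext x
  induction k with
  | zero => simp [transMap, Nat.leRecOn_self]
  | succ k ih =>
    have h' : m ≤ m + k := by omega
    have e : transMap G f m (m + (k + 1)) h = (f (m + k)).comp (transMap G f m (m + k) h') :=
      Nat.leRecOn_succ (C := fun k => (G m).X →ₐ[A] (G k).X) h' _
    rw [e, AlgHom.comp_apply, ih]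
    exact (Nat.leRecOn_succ (C := fun k => (G k).X) h' _).symm

instance trans_directed : DirectedSystem (fun n => (G n).X) fun i j h => transMap G f i j h :=
  ⟨fun _ _ => by rw [coe_trans]; exact Nat.leRecOn_self _,
   fun _ _ _ hij hjk => by
    intro x
    simp only [coe_trans]
    exact (Nat.leRecOn_trans (C := fun k => (G k).X) hij hjk x).symm⟩

/-- The union. -/
abbrev Lim : Type u := DirectLimit (fun n => (G n).X) (transMap G f)

/-- The canonical map. -/
noncomputable def toLim (n : ℕ) : (G n).X →ₐ[A] Lim G f :=
  DirectLimit.Algebra.of (fun n => (G n).X) (transMap G f) n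

lemma toLim_trans (m n : ℕ) (h : m ≤ n) (x : (G m).X) :
    toLim G f n (transMap G f m n h x) = toLim G f m x :=
  DirectLimit.Algebra.of_f (G := fun n => (G n).X) (f := transMap G f) h x

lemma transMap_succ (n : ℕ) (x : (G n).X) :
    transMap G f n (n + 1) (Nat.le_succ n) x = f n x := by
  rw [coe_trans]
  exact Nat.leRecOn_succ' (C := fun k => (G k).X) (next := fun {k} => f k) x

lemma toLim_succ (n : ℕ) (x : (G n).X) : toLim G f (n + 1) (f n x) = toLim G f n x := by
  rw [← transMap_succ, toLim_trans]

lemma toLim_injective (hf : ∀ n, Function.Injective (f n)) (n : ℕ) :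
    Function.Injective (toLim G f n) := by
  refine DirectLimit.mk_injective (F := fun n => (G n).X) (transMap G f) (fun i j hij => ?_) n
  rw [coe_trans]
  exact Nat.leRecOn_injective hij _ fun k => hf k

lemma toLim_surj (y : Lim G f) : ∃ n x, toLim G f n x = y := by
  obtain ⟨n, x, rfl⟩ := DirectLimit.exists_eq_mk (transMap G f) y
  exact ⟨n, x, rfl⟩

lemma toLim_surj_finset (s : Finset (Lim G f)) : ∃ n, ∀ y ∈ s, ∃ x, toLim G f n x = y := by
  choose n x hx using toLim_surj G f
  refine ⟨s.sup n, fun y hy => ⟨transMap G f (n y) _ (Finset.le_sup hy) (x y), ?_⟩⟩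
  rw [toLim_trans, hx]

lemma good_lim (hf : ∀ n, Function.Injective (f n)) (hG : ∀ n, Good A (G n).X) :
    Good A (Lim G f) := by
  classical
  intro s
  obtain ⟨n, hn⟩ := toLim_surj_finset G f s
  choose! x hx using hn
  obtain ⟨T, hT, hs⟩ := hG n (s.image x)
  exact ⟨T.map (toLim G f n), hT.map _ (toLim_injective G f hf n),
    fun y hy => ⟨x y, hs _ (Finset.mem_image_of_mem _ hy), hx y hy⟩⟩

end

theorem exists_closed {p : ℕ} (hp : p ≠ 0) (A : Type u) [CommRing A] (hpu : IsUnit (p : A)) :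
    ∃ (B : Type u) (_ : CommRing B) (_ : Algebra A B), Good A B ∧
      ∀ t : B, IsUnit t → ∃ s : B, s ^ p = t := by
  classical
  have hf := seqSucc_injective hp A
  refine ⟨Lim (seqAlg p A) (seqSucc p A), inferInstance, inferInstance,
    good_lim _ _ hf (seqAlg_good hp A hpu), ?_⟩
  intro t ht
  obtain ⟨t', ht'⟩ := ht.exists_right_inv
  obtain ⟨n, hn⟩ := toLim_surj_finset (seqAlg p A) (seqSucc p A) {t, t'}
  obtain ⟨x, rfl⟩ := hn t (by simp)
  obtain ⟨y, rfl⟩ := hn t' (by simp)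
  rw [← map_mul, ← map_one (toLim (seqAlg p A) (seqSucc p A) n)] at ht'
  have hxy := toLim_injective (seqAlg p A) (seqSucc p A) hf n ht'
  obtain ⟨s, hs⟩ := seqSucc_root A n (Units.mkOfMulEqOne x y hxy)
  refine ⟨toLim (seqAlg p A) (seqSucc p A) (n + 1) s, ?_⟩
  rw [← map_pow, hs, toLim_succ]
  rfl

end TowerAux


namespace TowerAux

lemma Good.of_equiv {A B C : Type u} [CommRing A] [CommRing B] [CommRing C] [Algebra A B]
    [Algebra A C] (h : Good A B) (e : B ≃ₐ[A] C) : Good A C := by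
  classical
  intro s
  obtain ⟨T, hT, hs⟩ := h (s.image e.symm)
  exact ⟨T.map (e : B →ₐ[A] C), hT.map _ e.injective,
    fun x hx => ⟨e.symm x, hs _ (Finset.mem_image_of_mem _ hx), e.apply_symm_apply x⟩⟩

lemma FEFF.exists_finset {A B : Type u} [CommRing A] [CommRing B] [Algebra A B]
    {T : Subalgebra A B} (hT : FEFF A T) :
    ∃ s : Finset B, ∀ T' : Subalgebra A B, (∀ x ∈ s, x ∈ T') → T ≤ T' := by
  have h := hT.finite
  have h' : (Subalgebra.toSubmodule T).FG := Module.Finite.iff_fg.1 h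
  obtain ⟨s, hs⟩ := h'
  refine ⟨s, fun T' h x hx => ?_⟩
  have hmem : x ∈ Submodule.span A (s : Set B) := by rw [hs]; exact hx
  have hle : Submodule.span A (s : Set B) ≤ Subalgebra.toSubmodule T' := Submodule.span_le.2 h
  exact hle hmem

/-- The transfer statement, from a good algebra over the localization to a `GoodTower`. -/
theorem goodTower_of {R : Type u} [CommRing R] {p : ℕ} (hp : p ≠ 0) {B : Type u} [CommRing B]
    [Algebra (Localization.Away (p : R)) B] [Algebra R B]
    [IsScalarTower R (Localization.Away (p : R)) B] (hB : Good (Localization.Away (p : R)) B)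
    (hroot : ∀ t : B, IsUnit t → ∃ s : B, s ^ p = t) :
    GoodTower p (⟨integralClosure R B⟩ : AlgPack R) := by
  classical
  have hpu : IsUnit (algebraMap R B (p : R)) := by
    rw [IsScalarTower.algebraMap_apply R (Localization.Away (p : R)) B]
    exact (IsLocalization.Away.algebraMap_isUnit (p : R)).map _
  have hint : ∀ b : B, IsIntegral (Localization.Away (p : R)) b := by
    intro b
    obtain ⟨T, hT, hbT⟩ := hB {b}
    have := hT.finite
    exact (Algebra.IsIntegral.isIntegral (R := Localization.Away (p : R))
      (⟨b, hbT b (by simp)⟩ : T)).map T.val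
  let q : integralClosure R B := algebraMap R (integralClosure R B) (p : R)
  have hloc : IsLocalization.Away q B := by
    refine ⟨?_, ?_, ?_⟩
    · rintro ⟨_, n, rfl⟩
      change IsUnit (algebraMap (integralClosure R B) B (q ^ n))
      rw [map_pow]
      exact hpu.pow n
    · intro b
      obtain ⟨⟨_, n, rfl⟩, hm⟩ := IsIntegral.exists_multiple_integral_of_isLocalization
        (Submonoid.powers (p : R)) b (hint b)
      refine ⟨(⟨_, hm⟩, ⟨q ^ n, n, rfl⟩), ?_⟩
      change b * algebraMap (integralClosure R B) B (q ^ n) = ((p : R) ^ n) • b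
      rw [map_pow, Algebra.smul_def, map_pow, mul_comm]
      rfl
    · intro x y h
      exact ⟨1, by rw [Subtype.ext h]⟩
  let L := Localization.Away (algebraMap R (integralClosure R B) (p : R))
  let e : L ≃ₐ[integralClosure R B] B := IsLocalization.algEquiv (Submonoid.powers q) L B
  refine ⟨?_, ⟨?_, ?_⟩, ?_⟩
  · let _ : Algebra (Localization.Away (p : R)) L :=
      (Localization.awayMap (algebraMap R (integralClosure R B)) (p : R)).toAlgebra
    have hcomm : (e : L →+* B).comp
        (Localization.awayMap (algebraMap R (integralClosure R B)) (p : R)) =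
        algebraMap (Localization.Away (p : R)) B := by
      refine IsLocalization.ringHom_ext (Submonoid.powers (p : R)) ?_
      ext r
      have h1 : Localization.awayMap (algebraMap R (integralClosure R B)) (p : R)
          (algebraMap R _ r) = algebraMap (integralClosure R B) L (algebraMap R _ r) :=
        IsLocalization.map_eq _ _
      simp only [RingHom.comp_apply]
      rw [h1, ← IsScalarTower.algebraMap_apply R (Localization.Away (p : R)) B]
      exact e.commutes _
    let e' : B ≃ₐ[Localization.Away (p : R)] L :=
      (AlgEquiv.ofRingEquiv (f := e.toRingEquiv) fun a => RingHom.congr_fun hcomm a).symm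
    change ∃ 𝒮 : Set (Subalgebra (Localization.Away (p : R)) L), _
    refine ⟨{T | FEFF (Localization.Away (p : R)) T}, fun T hT => ⟨hT.1, hT.2, hT.3⟩, ?_, ?_⟩
    · intro T hT T' hT'
      obtain ⟨s, hs⟩ := hT.exists_finset
      obtain ⟨s', hs'⟩ := hT'.exists_finset
      obtain ⟨T'', h1, h2⟩ := (hB.of_equiv e') (s ∪ s')
      exact ⟨T'', h1, hs _ fun x hx => h2 x (Finset.mem_union_left _ hx),
        hs' _ fun x hx => h2 x (Finset.mem_union_right _ hx)⟩
    · intro x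
      obtain ⟨T, hT, hx⟩ := (hB.of_equiv e') {x}
      exact ⟨T, hT, hx x (by simp)⟩
  · intro x y h
    have h' : e (algebraMap (integralClosure R B) L x) = e (algebraMap (integralClosure R B) L y) :=
      congrArg e h
    rw [e.commutes, e.commutes] at h'
    exact Subtype.ext h'
  · intro x
    constructor
    · rintro ⟨f, hf, hfx⟩
      change Polynomial.eval₂ ((algebraMap (integralClosure R B) L).comp
        (algebraMap R (integralClosure R B))) x f = 0 at hfx
      have h' := congrArg (e : L →+* B) hfx
      rw [Polynomial.hom_eval₂, map_zero, ← RingHom.comp_assoc] at h'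
      have hc : ((e : L →+* B).comp (algebraMap (integralClosure R B) L)).comp
          (algebraMap R (integralClosure R B)) = algebraMap R B := by
        ext r
        exact e.commutes _
      rw [hc] at h'
      refine ⟨⟨e x, ⟨f, hf, h'⟩⟩, e.injective ?_⟩
      exact e.commutes _
    · rintro ⟨r, rfl⟩
      obtain ⟨f, hf, hfr⟩ := (integralClosure.isIntegral (R := R) (A := B) r)
      refine ⟨f, hf, ?_⟩
      have h' := congrArg (algebraMap (integralClosure R B) L) hfr
      rw [Polynomial.hom_eval₂, map_zero] at h'
      exact h'
  · intro t
    obtain ⟨s, hs⟩ := hroot ((t : integralClosure R B) : B)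
      (t.isUnit.map (integralClosure R B).val)
    refine ⟨⟨s, ?_⟩, Subtype.ext hs⟩
    have : IsIntegral R (s ^ p) := by rw [hs]; exact (t : integralClosure R B).2
    exact IsIntegral.of_pow (Nat.pos_of_ne_zero hp) this

end TowerAux


namespace TowerAux

lemma div_integral {R B : Type u} [CommRing R] [CommRing B] [Algebra R B] {p : ℕ} (hp : p ≠ 0)
    (c : R) (hc : IsUnit (algebraMap R B c)) (x w : integralClosure R B)
    (h : x ^ p = algebraMap R (integralClosure R B) c ^ p * w) :
    ∃ z, x = algebraMap R (integralClosure R B) c * z := by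
  obtain ⟨d, hd⟩ := hc.exists_right_inv
  have hB : (x : B) ^ p = algebraMap R B c ^ p * w := congrArg Subtype.val h
  have hz : ((x : B) * d) ^ p = w := by
    rw [mul_pow, hB, mul_right_comm, ← mul_pow, hd, one_pow, one_mul]
  refine ⟨⟨(x : B) * d, ?_⟩, Subtype.ext ?_⟩
  · have : IsIntegral R (((x : B) * d) ^ p) := by rw [hz]; exact w.2
    exact IsIntegral.of_pow (Nat.pos_of_ne_zero hp) this
  · change (x : B) = algebraMap R B c * (x * d)
    rw [mul_left_comm, hd, mul_one]

theorem frobenius_part {R B : Type u} [CommRing R] [CommRing B] [Algebra R B] {p : ℕ}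
    (hp : p.Prime) (hpu : IsUnit (algebraMap R B (p : R)))
    (hroot : ∀ t : (integralClosure R B)ˣ, ∃ s : integralClosure R B, s ^ p = t)
    (hj : (p : R) ∈ (⊥ : Ideal R).jacobson) (p₂ : R) (v : Rˣ) (hv : (p : R) = v * p₂ ^ (p ^ 2)) :
    (∀ x : integralClosure R B, (∃ y : integralClosure R B, x ^ p = (p : integralClosure R B) * y) →
      ∃ z : integralClosure R B, x = algebraMap R (integralClosure R B) p₂ ^ p * z) ∧
    (∀ x : integralClosure R B, ∃ y z : integralClosure R B,
      x = y ^ p + (p : integralClosure R B) * z) := by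
  have hp0 := hp.ne_zero
  have hp2u : IsUnit (algebraMap R B p₂) := by
    rw [hv, map_mul, map_pow] at hpu
    exact (isUnit_pow_iff (pow_ne_zero 2 hp0)).1 (isUnit_of_mul_isUnit_right hpu)
  set X := integralClosure R B with hX
  set q : X := algebraMap R X p₂ with hq
  set V : X := algebraMap R X v with hV
  set W : X := algebraMap R X ((v⁻¹ : Rˣ) : R) with hW
  have hVW : V * W = 1 := by rw [hV, hW, ← map_mul]; simp
  have hpX : (p : X) = V * q ^ (p ^ 2) := by
    have := congrArg (algebraMap R X) hv
    simpa using this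
  have hreg : ∀ n : ℕ, ∀ a b : X, q ^ n * a = q ^ n * b → a = b := by
    intro n a b h
    have hB : algebraMap R B p₂ ^ n * (a : B) = algebraMap R B p₂ ^ n * b :=
      congrArg Subtype.val h
    exact Subtype.ext ((hp2u.pow n).mul_left_cancel hB)
  refine ⟨?_, ?_⟩
  · rintro x ⟨y, hy⟩
    obtain ⟨z, hz⟩ := div_integral hp0 (p₂ ^ p) (by rw [map_pow]; exact hp2u.pow p) x (V * y) (by
      rw [hy, hpX, map_pow, ← pow_mul, ← pow_two]; ring)
    exact ⟨z, by rw [hz, map_pow]⟩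
  have hjac : q ^ p ∈ (⊥ : Ideal X).jacobson := by
    rw [Ideal.jacobson, Ideal.mem_sInf]
    rintro M ⟨-, hM⟩
    have hc : (M.comap (algebraMap R X)).IsMaximal :=
      Ideal.isMaximal_comap_of_isIntegral_of_isMaximal M
    have h1 : (p : R) ∈ M.comap (algebraMap R X) := by
      rw [Ideal.jacobson, Ideal.mem_sInf] at hj
      exact hj ⟨bot_le, hc⟩
    rw [hv, Ideal.mem_comap, map_mul, map_pow] at h1
    have h2 : q ^ (p ^ 2) ∈ M := by
      have := M.mul_mem_left W h1
      rwa [← mul_assoc, mul_comm W, hVW, one_mul] at this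
    exact M.pow_mem_of_mem (hM.isPrime.mem_of_pow_mem _ h2) p hp.pos
  obtain ⟨m, hm⟩ : ∃ m, p ^ 2 = p + (p + m) := by
    obtain ⟨k, hk⟩ := Nat.exists_eq_add_of_le hp.two_le
    exact ⟨p ^ 2 - 2 * p, by nlinarith [Nat.sub_add_cancel (show 2 * p ≤ p ^ 2 by nlinarith)]⟩
  have H1 : ∀ x : X, ∃ y z : X, x = y ^ p + q ^ p * z := by
    intro x
    have hu := Ideal.mem_jacobson_bot.1 hjac x
    obtain ⟨s, hs⟩ := hroot hu.unit
    rw [IsUnit.unit_spec] at hs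
    obtain ⟨r, hr⟩ := exists_add_pow_prime_eq hp (s - 1) 1
    rw [sub_add_cancel, hs, one_pow, hpX, hm, pow_add q p (p + m)] at hr
    have hw : (s - 1) ^ p = q ^ p * (x - V * q ^ (p + m) * ((s - 1) * 1 * r)) := by
      linear_combination - hr
    obtain ⟨y, hy⟩ := div_integral hp0 p₂ hp2u (s - 1) _ hw
    rw [hy, mul_pow] at hw
    have hy' := hreg p _ _ hw
    rw [pow_add q p m] at hy'
    exact ⟨y, V * q ^ m * (q * y * 1 * r), by rw [hy']; ring⟩
  have H2 : ∀ k : ℕ, ∀ x : X, ∃ y z a : X, x = y ^ p + (q ^ k) ^ p * z + p * a := by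
    intro k
    induction k with
    | zero => intro x; exact ⟨0, x, 0, by simp [hp0]⟩
    | succ k ih =>
      intro x
      obtain ⟨y, z, a, h⟩ := ih x
      obtain ⟨y1, z1, h1⟩ := H1 z
      obtain ⟨r, hr⟩ := exists_add_pow_prime_eq hp y (q ^ k * y1)
      refine ⟨y + q ^ k * y1, z1, a - (y * (q ^ k * y1) * r), ?_⟩
      rw [hr, h, h1]
      ring
  intro x
  obtain ⟨y, z, a, h⟩ := H2 p x
  refine ⟨y, W * z + a, ?_⟩
  rw [← pow_mul, ← pow_two] at h
  rw [h, hpX]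
  linear_combination (- q ^ (p ^ 2) * z) * hVW

end TowerAux

theorem exists_pro_finite_etale_tower (p : ℕ) (hp : p.Prime) (R : Type u) [CommRing R] :
    (∃ P : AlgPack R, GoodTower p P) ∧
    ((p : R) ∈ (⊥ : Ideal R).jacobson →
      ∀ (p₂ : R) (v : Rˣ), (p : R) = v * p₂ ^ (p ^ 2) →
      ∃ P : AlgPack R, GoodTower p P ∧
        -- (iv) the map `R_∞/p₁R_∞ → R_∞/pR_∞`, `x ↦ x^p` (with `p₁ = p₂^p`), is bijective
        ((∀ x : P.X, (∃ y : P.X, x ^ p = (p : P.X) * y) →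
            ∃ z : P.X, x = algebraMap R P.X p₂ ^ p * z) ∧
         (∀ x : P.X, ∃ y z : P.X, x = y ^ p + (p : P.X) * z))) := by
  have hu : IsUnit (algebraMap R (Localization.Away (p : R)) (p : R)) :=
    IsLocalization.Away.algebraMap_isUnit (p : R)
  obtain ⟨B, _, _, hB, hroot⟩ := TowerAux.exists_closed hp.ne_zero (Localization.Away (p : R))
    (by simpa using hu)
  let _ : Algebra R B :=
    ((algebraMap (Localization.Away (p : R)) B).comp (algebraMap R _)).toAlgebra
  have : IsScalarTower R (Localization.Away (p : R)) B := IsScalarTower.of_algebraMap_eq' rfl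
  have hG := TowerAux.goodTower_of (R := R) hp.ne_zero hB hroot
  refine ⟨⟨_, hG⟩, fun hj p₂ v hv => ⟨_, hG, ?_⟩⟩
  exact TowerAux.frobenius_part hp (hu.map (algebraMap (Localization.Away (p : R)) B))
    hG.2.2 hj p₂ v hv
end

section
/- Let A be a valuation ring of height 1 (a valuation domain of Krull dimension 1) and let X be a scheme of finite type over Spec A. Then the underlying topological space of X is a Noetherian topological space. -/
/-!
STATEMENT 18: Let `A` be a valuation ring of height `1` and `X` a scheme of finite type over
`Spec A`.  Then the underlying topological space of `X` is Noetherian.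
-/

open AlgebraicGeometry CategoryTheory

universe u

theorem fiber_noetherianSpace {X Y : Scheme.{u}} (f : X ⟶ Y)
    [LocallyOfFiniteType f] [QuasiCompact f] (y : Y) :
    TopologicalSpace.NoetherianSpace (f ⁻¹' {y}) := by
  have h1 : LocallyOfFiniteType (f.fiberToSpecResidueField y) :=
    (inferInstance :
      LocallyOfFiniteType (Limits.pullback.snd f (Y.fromSpecResidueField y)))
  have h2 : IsLocallyNoetherian (f.fiber y) :=
    LocallyOfFiniteType.isLocallyNoetherian (f.fiberToSpecResidueField y)
  have h3 : IsNoetherian (f.fiber y) := { __ := h2 }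
  exact (TopologicalSpace.noetherianSpace_iff_of_homeomorph (f.fiberHomeo y)).mp inferInstance

theorem finite_primeSpectrum (A : Type u) [CommRing A] [IsDomain A] [IsLocalRing A]
    (hA : ringKrullDim A = 1) : Finite (PrimeSpectrum A) := by
  have : Ring.KrullDimLE 1 A := Ring.krullDimLE_iff.mpr (by simp [hA])
  refine Set.finite_univ_iff.mp (Set.Finite.subset
    (Set.toFinite {(⊥ : PrimeSpectrum A), IsLocalRing.closedPoint A}) fun p _ => ?_)
  by_cases h : p.asIdeal = ⊥
  · exact Or.inl (PrimeSpectrum.ext h)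
  · exact Or.inr (PrimeSpectrum.ext
      (IsLocalRing.eq_maximalIdeal (Ideal.IsPrime.isMaximal_of_ne_bot p.2 h)))

theorem noetherianSpace_of_finiteType_over_valuationRing
    (A : Type u) [CommRing A] [IsDomain A] [ValuationRing A]
    (hA : ringKrullDim A = 1)
    (X : Scheme.{u}) (f : X ⟶ Spec (CommRingCat.of A))
    [LocallyOfFiniteType f] [QuasiCompact f] :
    TopologicalSpace.NoetherianSpace X := by
  have hfin : Finite (Spec (CommRingCat.of A)) := finite_primeSpectrum A hA
  have hf := fiber_noetherianSpace f
  have key := TopologicalSpace.NoetherianSpace.iUnion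
    (fun y : Spec (CommRingCat.of A) => f ⁻¹' {y})
  have hU : (⋃ y : Spec (CommRingCat.of A), f ⁻¹' {y}) = Set.univ :=
    Set.eq_univ_of_forall fun x => Set.mem_iUnion.mpr ⟨f x, rfl⟩
  rw [hU] at key
  exact TopologicalSpace.noetherian_univ_iff.mp key
end
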